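/- Let k ≥ 6 be an integer and let α, β ∈ {0,1,…,k}. There exists a k-L(2,1)-labelling L of the gadget G_k with L(u) = L(v) = 0, L(a_u) = α and L(a_v) = β if and only if (α,β) ∈ {(2,k), (k,2), (k−2,k), (k,k−2)}. -/

import Mathlib

/-- For an integer `k`, a `k`-L(2,1)-labelling of a graph `G` is a map from the vertices
to `{0,1,…,k}` such that labels of adjacent vertices differ by at least `2` and vertices
at distance exactly `2` get distinct labels. -/
def IsL21Labelling {V : Type*} (G : SimpleGraph V) (k : ℕ) (L : V → ℕ) : Prop :=
  (∀ v, L v ≤ k) ∧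
  (∀ x y, G.Adj x y → 2 ≤ |(L x : ℤ) - (L y : ℤ)|) ∧
  (∀ x y, G.dist x y = 2 → L x ≠ L y)

/-- The vertices of the graph `H'` for a given `k`:
`c, d, e, f₁, …, f_{k-3}, g, h, i`. -/
inductive HpV (k : ℕ) | c | d | e | f (j : Fin (k - 3)) | g | h | i
deriving DecidableEq

/-- The adjacency generating relation of `H'`: edges `cd`, `de`, `gh`, `gi`,
and `d fⱼ`, `g fⱼ` for every `j`. -/
def HpAdj (k : ℕ) : HpV k → HpV k → Prop := fun x y =>
  (x = HpV.c ∧ y = HpV.d) ∨ (x = HpV.d ∧ y = HpV.e) ∨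
  (x = HpV.g ∧ y = HpV.h) ∨ (x = HpV.g ∧ y = HpV.i) ∨
  (∃ j, (x = HpV.d ∧ y = HpV.f j) ∨ (x = HpV.g ∧ y = HpV.f j))

/-- The vertices of the gadget `G_k` (for `k ≥ 6`): the path `u, a_u, a_v, v`,
the vertices `b₁, …, b_{k-5}`, and for each `i` two copies (indexed by `Bool`)
of the graph `H'`. -/
inductive GkV (k : ℕ)
| u | au | av | v
| b (i : Fin (k - 5))
| hp (i : Fin (k - 5)) (s : Bool) (x : HpV k)

/-- The adjacency generating relation of the gadget `G_k` (for `k ≥ 6`):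
the path `u a_u`, `a_u a_v`, `a_v v`; each `bᵢ` joined to `a_u` and `a_v`;
the vertex `c` of each of the two copies of `H'` at `bᵢ` joined to `bᵢ`;
and the edges of `H'` inside each copy. -/
def GkAdj (k : ℕ) : GkV k → GkV k → Prop := fun x y =>
  (x = GkV.u ∧ y = GkV.au) ∨ (x = GkV.au ∧ y = GkV.av) ∨ (x = GkV.av ∧ y = GkV.v) ∨
  (∃ i, (x = GkV.au ∧ y = GkV.b i) ∨ (x = GkV.av ∧ y = GkV.b i)) ∨
  (∃ i s, x = GkV.b i ∧ y = GkV.hp i s HpV.c) ∨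
  (∃ i s x' y', x = GkV.hp i s x' ∧ y = GkV.hp i s y' ∧ HpAdj k x' y')

/-- The gadget `G_k` (for `k ≥ 6`). -/
def Gk (k : ℕ) : SimpleGraph (GkV k) := SimpleGraph.fromRel (GkAdj k)

/-!
A vertex with `k - 1` neighbours can only be labelled `0` or `k`, because a label in between
excludes three values at its neighbours and leaves only `k - 2`. In `H'` this applies to `d` and
`g`: one of them gets `0` and the other `k`, the `f_j` use up exactly the labels `2, …, k - 2`,
and `c` is left with one of the two labels at the opposite end from `d`.

In `G_k` this keeps every `b_i` in `{1, …, k - 1}`, and when some `b_i` is labelled `1` the two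
vertices `c` next to it take both `k - 1` and `k`, which pushes `a_u` and `a_v` down to `k - 2`.
The `k - 5` distinct labels of the `b_i` also avoid the neighbourhoods of the labels of `a_u` and
`a_v`, and counting what remains forces the four pairs. For the converse, labellings of `H'` and
their complements `k - L` are glued into `G_k`.
-/

/-- Two labels are far enough apart to be used on adjacent vertices. Stated without subtraction
and kept reducible so that `omega` sees through it. -/
abbrev TwoApart (a b : ℕ) : Prop := a + 2 ≤ b ∨ b + 2 ≤ a

lemma two_le_abs_sub_iff_twoApart (a b : ℕ) : 2 ≤ |(a : ℤ) - b| ↔ TwoApart a b := by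
  rw [le_abs]
  omega

lemma TwoApart.ne {a b : ℕ} (h : TwoApart a b) : a ≠ b := by omega

lemma dist_eq_two_iff {V : Type*} (G : SimpleGraph V) {x y : V} :
    G.dist x y = 2 ↔ x ≠ y ∧ ¬ G.Adj x y ∧ ∃ z, G.Adj z x ∧ G.Adj z y := by
  rw [SimpleGraph.dist, ENat.toNat_eq_iff two_ne_zero, Nat.cast_ofNat, SimpleGraph.edist_eq_two_iff]
  simp only [Set.Nonempty, SimpleGraph.mem_commonNeighbors, G.adj_comm]

lemma injOn_insert_insert_range {α β ι : Type*} {g : α → β} {a b : α} {f : ι → α}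
    (hf : Function.Injective (g ∘ f)) (hab : g a ≠ g b) (ha : ∀ i, g a ≠ g (f i))
    (hb : ∀ i, g b ≠ g (f i)) : (insert a (insert b (Set.range f))).InjOn g := by
  have hb' : b ∉ Set.range f := by
    rintro ⟨i, rfl⟩
    exact hb i rfl
  have ha' : a ∉ insert b (Set.range f) := by
    rintro (rfl | ⟨i, rfl⟩)
    · exact hab rfl
    · exact ha i rfl
  rw [Set.injOn_insert ha', Set.injOn_insert hb', Set.image_insert_eq, ← Set.range_comp]
  refine ⟨⟨hf.injOn_range, ?_⟩, ?_⟩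
  · rintro ⟨i, hi⟩
    exact hb i hi.symm
  · rintro (h | ⟨i, hi⟩)
    · exact hab h
    · exact ha i hi.symm

lemma eq_and_eq_two_or_eq_sub_two_of_twoApart {k α β : ℕ} (hk : 6 ≤ k) (hα : 2 ≤ α)
    (hαβ : α + 2 ≤ β) (hβ : β ≤ k) {B : Finset ℕ} (hB : B ⊆ Finset.Icc 1 (k - 1))
    (hcard : k ≤ B.card + 5) (hαB : ∀ x ∈ B, TwoApart α x) (hβB : ∀ x ∈ B, TwoApart β x)
    (hone : 1 ∈ B → β ≤ k - 2) : β = k ∧ (α = 2 ∨ α = k - 2) := by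
  have hmem (x : ℕ) (hx : x ∈ B) : 1 ≤ x ∧ x ≤ k - 1 ∧ TwoApart α x ∧ TwoApart β x :=
    ⟨(Finset.mem_Icc.1 (hB hx)).1, (Finset.mem_Icc.1 (hB hx)).2, hαB x hx, hβB x hx⟩
  obtain hβk | hβk := le_or_gt β (k - 2)
  · have hsub : B ⊆ Finset.Icc 1 (α - 2) ∪ Finset.Icc (α + 2) (β - 2) ∪
        Finset.Icc (β + 2) (k - 1) := by
      intro x hx
      have := hmem x hx
      simp only [Finset.mem_union, Finset.mem_Icc]
      omega
    have hcount := (Finset.card_le_card hsub).trans <| (Finset.card_union_le _ _).trans <|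
      Nat.add_le_add_right (Finset.card_union_le _ _) _
    simp only [Nat.card_Icc] at hcount
    omega
  · have hsub : B ⊆ Finset.Icc 2 (α - 2) ∪ Finset.Icc (α + 2) (β - 2) := by
      intro x hx
      have := hmem x hx
      have : x ≠ 1 := by
        rintro rfl
        exact hβk.not_ge (hone hx)
      simp only [Finset.mem_union, Finset.mem_Icc]
      omega
    have hcount := (Finset.card_le_card hsub).trans (Finset.card_union_le _ _)
    simp only [Nat.card_Icc] at hcount
    omega

section Labellings

variable {V W : Type*} {G : SimpleGraph V} {H : SimpleGraph W} {k : ℕ} {L : V → ℕ} {x y : V}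

theorem isL21Labelling_iff_neighborSet :
    IsL21Labelling G k L ↔ (∀ x, L x ≤ k) ∧
      ∀ x, (∀ y ∈ G.neighborSet x, TwoApart (L x) (L y)) ∧ (G.neighborSet x).InjOn L := by
  simp only [IsL21Labelling, two_le_abs_sub_iff_twoApart, forall_and]
  refine and_congr_right fun _ ↦ and_congr_right fun hadj ↦ ?_
  constructor
  · intro hdist z x hx y hy hxy
    by_contra hne
    have hnadj : ¬ G.Adj x y := fun h ↦ by
      have := hadj x y h
      omega
    exact hdist x y (dist_eq_two_iff G |>.2 ⟨hne, hnadj, z, hx, hy⟩) hxy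
  · intro hinj x y h hxy
    obtain ⟨hne, -, z, hx, hy⟩ := (dist_eq_two_iff G).1 h
    exact hne (hinj z hx hy hxy)

namespace IsL21Labelling

lemma le (hL : IsL21Labelling G k L) (x : V) : L x ≤ k := hL.1 x

lemma twoApart (hL : IsL21Labelling G k L) (h : y ∈ G.neighborSet x) : TwoApart (L x) (L y) :=
  ((isL21Labelling_iff_neighborSet.1 hL).2 x).1 y h

lemma injOn_neighborSet (hL : IsL21Labelling G k L) (x : V) : (G.neighborSet x).InjOn L :=
  ((isL21Labelling_iff_neighborSet.1 hL).2 x).2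

theorem comp_hom (hL : IsL21Labelling G k L) (φ : H →g G) (hφ : Function.Injective φ) :
    IsL21Labelling H k (L ∘ φ) :=
  isL21Labelling_iff_neighborSet.2 ⟨fun x ↦ hL.le (φ x), fun x ↦
    ⟨fun _ hy ↦ hL.twoApart (φ.map_adj hy),
      (hL.injOn_neighborSet (φ x)).comp hφ.injOn fun _ hy ↦ φ.map_adj hy⟩⟩

theorem complement (hL : IsL21Labelling G k L) : IsL21Labelling G k (fun x ↦ k - L x) := by
  refine isL21Labelling_iff_neighborSet.2 ⟨fun x ↦ Nat.sub_le k (L x), fun x ↦ ⟨?_, ?_⟩⟩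
  · intro y hy
    have := hL.twoApart hy
    have := hL.le x
    have := hL.le y
    omega
  · intro y hy z hz hyz
    have := hL.le y
    have := hL.le z
    exact hL.injOn_neighborSet x hy hz (by lia)

theorem eq_zero_or_eq_of_le_card_add_one (hL : IsL21Labelling G k L) {s : Finset V}
    (hs : ↑s ⊆ G.neighborSet x) (hcard : k ≤ s.card + 1) : L x = 0 ∨ L x = k := by
  by_contra! hne
  have hle := hL.le x
  have hsub : s.image L ⊆ Finset.Icc 0 k \ Finset.Icc (L x - 1) (L x + 1) := by
    refine Finset.image_subset_iff.2 fun y hy ↦ ?_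
    have := hL.twoApart (hs hy)
    have := hL.le y
    simp only [Finset.mem_sdiff, Finset.mem_Icc]
    omega
  have hforbidden : Finset.Icc (L x - 1) (L x + 1) ⊆ Finset.Icc 0 k :=
    Finset.Icc_subset_Icc (Nat.zero_le _) (by omega)
  have hcount := Finset.card_le_card hsub
  rw [Finset.card_image_of_injOn ((hL.injOn_neighborSet x).mono hs),
    Finset.card_sdiff_of_subset hforbidden, Nat.card_Icc, Nat.card_Icc] at hcount
  omega

end IsL21Labelling

end Labellings

/-- The graph `H'`. -/
def Hp (k : ℕ) : SimpleGraph (HpV k) := SimpleGraph.fromRel (HpAdj k)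

namespace Hp

variable {k : ℕ}

@[simp]
lemma neighborSet_c : (Hp k).neighborSet .c = {.d} := by
  ext x
  cases x <;> simp [Hp, HpAdj]

@[simp]
lemma neighborSet_d : (Hp k).neighborSet .d = insert .c (insert .e (Set.range .f)) := by
  ext x
  cases x <;> simp [Hp, HpAdj]

@[simp]
lemma neighborSet_e : (Hp k).neighborSet .e = {.d} := by
  ext x
  cases x <;> simp [Hp, HpAdj]

@[simp]
lemma neighborSet_f (j : Fin (k - 3)) : (Hp k).neighborSet (.f j) = {.d, .g} := by
  ext x
  cases x <;> simp [Hp, HpAdj]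

@[simp]
lemma neighborSet_g : (Hp k).neighborSet .g = insert .h (insert .i (Set.range .f)) := by
  ext x
  cases x <;> simp [Hp, HpAdj]

@[simp]
lemma neighborSet_h : (Hp k).neighborSet .h = {.g} := by
  ext x
  cases x <;> simp [Hp, HpAdj]

@[simp]
lemma neighborSet_i : (Hp k).neighborSet .i = {.g} := by
  ext x
  cases x <;> simp [Hp, HpAdj]

/-- The labelling of `H'` with `c` labelled `p` and `d` labelled `0`, meant for
`p ∈ {k - 1, k}`; then `2 * k - 1 - p` is the other element of `{k - 1, k}`. -/
def labelling (k p : ℕ) : HpV k → ℕ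
  | .c => p
  | .d => 0
  | .e => 2 * k - 1 - p
  | .f j => j + 2
  | .g => k
  | .h => 0
  | .i => 1

theorem isL21Labelling_labelling (hk : 3 ≤ k) {p : ℕ} (hp : k - 1 ≤ p) (hpk : p ≤ k) :
    IsL21Labelling (Hp k) k (labelling k p) := by
  have hadj {x y : HpV k} (h : HpAdj k x y) : TwoApart (labelling k p x) (labelling k p y) := by
    obtain ⟨rfl, rfl⟩ | ⟨rfl, rfl⟩ | ⟨rfl, rfl⟩ | ⟨rfl, rfl⟩ | ⟨j, ⟨rfl, rfl⟩ | ⟨rfl, rfl⟩⟩ := h <;>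
      simp only [labelling] <;> omega
  refine isL21Labelling_iff_neighborSet.2 ⟨fun x ↦ ?_, fun x ↦
    ⟨fun y hy ↦ hy.2.elim hadj fun h ↦ (hadj h).symm, ?_⟩⟩
  · cases x <;> simp only [labelling] <;> omega
  · have hf : Function.Injective (labelling k p ∘ .f) := fun i j hij ↦
      Fin.ext (Nat.add_right_cancel hij)
    cases x with
    | c | e | h | i => simp
    | d =>
      rw [neighborSet_d]
      apply injOn_insert_insert_range hf <;> simp only [labelling] <;> omega
    | f j =>
      rw [neighborSet_f, Set.injOn_pair]
      simp only [labelling]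
      omega
    | g =>
      rw [neighborSet_g]
      apply injOn_insert_insert_range hf <;> simp [labelling]

theorem exists_isL21Labelling (hk : 3 ≤ k) {p q : ℕ}
    (h : (q = 0 ∧ k - 1 ≤ p ∧ p ≤ k) ∨ (q = k ∧ p ≤ 1)) :
    ∃ M : HpV k → ℕ, IsL21Labelling (Hp k) k M ∧ M .c = p ∧ M .d = q := by
  obtain ⟨rfl, hp, hpk⟩ | ⟨rfl, hp⟩ := h
  · exact ⟨labelling k p, isL21Labelling_labelling hk hp hpk, rfl, rfl⟩
  · have hL := isL21Labelling_labelling (p := q - p) hk (by omega) (Nat.sub_le q p)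
    exact ⟨_, hL.complement, Nat.sub_sub_self (by omega), rfl⟩

section Necessity

variable {M : HpV k → ℕ}

lemma eq_zero_or_eq_of_neighborSet_eq (hM : IsL21Labelling (Hp k) k M) {x a b : HpV k}
    (hN : (Hp k).neighborSet x = insert a (insert b (Set.range .f)))
    (hab : a ≠ b) (ha : ∀ j, a ≠ .f j) (hb : ∀ j, b ≠ .f j) : M x = 0 ∨ M x = k := by
  classical
  refine hM.eq_zero_or_eq_of_le_card_add_one
    (s := insert a (insert b (Finset.univ.image .f))) (by simp [hN]) ?_
  have hf : Function.Injective (HpV.f (k := k)) := fun _ _ ↦ HpV.f.inj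
  have hb' : b ∉ Finset.univ.image .f := by simpa [eq_comm] using hb
  have ha' : a ∉ insert b (Finset.univ.image .f) := by simpa [hab, eq_comm] using ha
  rw [Finset.card_insert_of_notMem ha', Finset.card_insert_of_notMem hb',
    Finset.card_image_of_injective _ hf, Finset.card_univ, Fintype.card_fin]
  omega

lemma d_eq_zero_or_eq (hM : IsL21Labelling (Hp k) k M) : M .d = 0 ∨ M .d = k :=
  eq_zero_or_eq_of_neighborSet_eq hM neighborSet_d nofun nofun nofun

lemma g_eq_zero_or_eq (hM : IsL21Labelling (Hp k) k M) : M .g = 0 ∨ M .g = k :=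
  eq_zero_or_eq_of_neighborSet_eq hM neighborSet_g nofun nofun nofun

lemma image_f_eq_Icc (hM : IsL21Labelling (Hp k) k M) (hd : M .d = 0) :
    Finset.univ.image (fun j ↦ M (.f j)) = Finset.Icc 2 (k - 2) := by
  have hf : Function.Injective (fun j ↦ M (.f j)) := fun i j hij ↦
    HpV.f.inj (hM.injOn_neighborSet .d (by simp) (by simp) hij)
  refine Finset.eq_of_subset_of_card_le (Finset.image_subset_iff.2 fun j _ ↦ ?_) ?_
  · have hdf := hM.twoApart (x := .d) (y := .f j) (by simp)
    have hgf := hM.twoApart (x := .g) (y := .f j) (by simp)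
    have hdg : M .d ≠ M .g :=
      (hM.injOn_neighborSet (.f j)).ne (by simp) (by simp) nofun
    have := g_eq_zero_or_eq hM
    have := hM.le (.f j)
    rw [Finset.mem_Icc]
    omega
  · rw [Finset.card_image_of_injective _ hf, Finset.card_univ, Fintype.card_fin, Nat.card_Icc]
    omega

lemma sub_one_le_c (hM : IsL21Labelling (Hp k) k M) (hd : M .d = 0) : k - 1 ≤ M .c := by
  have hdc := hM.twoApart (x := .d) (y := .c) (by simp)
  have hc : M .c ∉ Finset.Icc 2 (k - 2) := by
    rw [← image_f_eq_Icc hM hd]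
    simp only [Finset.mem_image, Finset.mem_univ, true_and, not_exists]
    exact fun j ↦ (hM.injOn_neighborSet .d).ne (by simp) (by simp) nofun
  rw [Finset.mem_Icc] at hc
  omega

theorem d_eq_zero_and_le_c_or_d_eq_and_c_le (hM : IsL21Labelling (Hp k) k M) :
    (M .d = 0 ∧ k - 1 ≤ M .c) ∨ (M .d = k ∧ M .c ≤ 1) := by
  refine (d_eq_zero_or_eq hM).imp (fun hd ↦ ⟨hd, sub_one_le_c hM hd⟩) fun hd ↦ ⟨hd, ?_⟩
  have := sub_one_le_c hM.complement (by simp [hd])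
  have := hM.le .c
  omega

end Necessity
end Hp

namespace Gk

variable {k : ℕ}

@[simp]
lemma neighborSet_u : (Gk k).neighborSet .u = {.au} := by
  ext x
  cases x <;> simp [Gk, GkAdj]

@[simp]
lemma neighborSet_v : (Gk k).neighborSet .v = {.av} := by
  ext x
  cases x <;> simp [Gk, GkAdj]

@[simp]
lemma neighborSet_au : (Gk k).neighborSet .au = insert .u (insert .av (Set.range .b)) := by
  ext x
  cases x <;> simp [Gk, GkAdj]

@[simp]
lemma neighborSet_av : (Gk k).neighborSet .av = insert .v (insert .au (Set.range .b)) := by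
  ext x
  cases x <;> simp [Gk, GkAdj]

@[simp]
lemma neighborSet_b (i : Fin (k - 5)) :
    (Gk k).neighborSet (.b i) = insert .au (insert .av (Set.range fun s ↦ .hp i s .c)) := by
  ext x
  cases x with
  | hp j s x => cases s <;> simp [Gk, GkAdj, eq_comm]
  | _ => simp [Gk, GkAdj]

@[simp]
lemma neighborSet_hp_c (i : Fin (k - 5)) (s : Bool) :
    (Gk k).neighborSet (.hp i s .c) = {.b i, .hp i s .d} := by
  ext x
  cases x with
  | b j => simp [Gk, GkAdj, eq_comm]
  | hp j t x => grind [Gk, GkAdj, HpAdj, SimpleGraph.mem_neighborSet, SimpleGraph.fromRel_adj]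
  | _ => simp [Gk, GkAdj]

lemma neighborSet_hp (i : Fin (k - 5)) (s : Bool) {x : HpV k} (hx : x ≠ .c) :
    (Gk k).neighborSet (.hp i s x) = .hp i s '' (Hp k).neighborSet x := by
  ext y
  cases y with
  | hp j t y => grind [Gk, Hp, GkAdj, SimpleGraph.mem_neighborSet, SimpleGraph.fromRel_adj]
  | _ => simp [Gk, GkAdj, hx]

/-- The copy of `H'` with index `(i, s)` inside `G_k`. -/
def hpHom (i : Fin (k - 5)) (s : Bool) : Hp k →g Gk k where
  toFun := .hp i s
  map_rel' {x y} h := by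
    simp only [Hp, Gk, SimpleGraph.fromRel_adj] at h ⊢
    simpa [GkAdj] using h

lemma hpHom_injective (i : Fin (k - 5)) (s : Bool) : Function.Injective (hpHom i s) :=
  fun _ _ h ↦ (GkV.hp.inj h).2.2

/-- The reflection of the vertices of `G_k` that exchanges the two ends of the path
`u, a_u, a_v, v`. -/
def swap : GkV k → GkV k
  | .u => .v
  | .au => .av
  | .av => .au
  | .v => .u
  | .b i => .b i
  | .hp i s x => .hp i s x

lemma swap_involutive : Function.Involutive (swap (k := k)) := by
  rintro (_ | _ | _ | _ | _ | _) <;> rfl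

/-- The reflection `swap` as a graph homomorphism. -/
def swapHom (k : ℕ) : Gk k →g Gk k where
  toFun := swap
  map_rel' {x y} h := by
    simp only [Gk, SimpleGraph.fromRel_adj] at h ⊢
    refine ⟨swap_involutive.injective.ne h.1, ?_⟩
    cases x <;> cases y <;> simp_all [GkAdj, swap]

/-- The pairs of labels that `a_u`, `a_v` can receive in a labelling with `u`, `v` labelled `0`. -/
def IsAttained (k α β : ℕ) : Prop :=
  ∃ L : GkV k → ℕ, IsL21Labelling (Gk k) k L ∧ L .u = 0 ∧ L .v = 0 ∧ L .au = α ∧ L .av = β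

lemma IsAttained.symm {α β : ℕ} : IsAttained k α β → IsAttained k β α :=
  fun ⟨L, hL, hu, hv, hau, hav⟩ ↦
    ⟨L ∘ swapHom k, hL.comp_hom (swapHom k) swap_involutive.injective, hv, hu, hav, hau⟩

section Existence

/-- Labels `α`, `β` of `a_u`, `a_v`, labels `b i` of the vertices `b_i` and labellings `M s` of `H'`
that glue to a labelling of `G_k` with `u`, `v` labelled `0`. The copies `(i, s)` of `H'` are
labelled by `M s` for every `i`. -/
structure Compatible (k α β : ℕ) (b : Fin (k - 5) → ℕ) (M : Bool → HpV k → ℕ) : Prop where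
  two_le_au : 2 ≤ α
  au_le : α ≤ k
  two_le_av : 2 ≤ β
  av_le : β ≤ k
  au_av : TwoApart α β
  b_injective : Function.Injective b
  b_pos : ∀ i, 0 < b i
  b_le : ∀ i, b i ≤ k
  au_b : ∀ i, TwoApart α (b i)
  av_b : ∀ i, TwoApart β (b i)
  isL21Labelling : ∀ s, IsL21Labelling (Hp k) k (M s)
  c_injective : Function.Injective fun s ↦ M s .c
  au_ne_c : ∀ s, α ≠ M s .c
  av_ne_c : ∀ s, β ≠ M s .c
  b_c : ∀ i s, TwoApart (b i) (M s .c)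
  b_ne_d : ∀ i s, b i ≠ M s .d

/-- The labelling of `G_k` glued from the data of `Compatible`. -/
def gluedLabelling (α β : ℕ) (b : Fin (k - 5) → ℕ) (M : Bool → HpV k → ℕ) : GkV k → ℕ
  | .u => 0
  | .au => α
  | .av => β
  | .v => 0
  | .b i => b i
  | .hp _ s x => M s x

namespace Compatible

variable {α β : ℕ} {b : Fin (k - 5) → ℕ} {M : Bool → HpV k → ℕ}

lemma gluedLabelling_le (h : Compatible k α β b M) (x : GkV k) :
    gluedLabelling α β b M x ≤ k := by
  cases x with
  | u | v => exact Nat.zero_le k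
  | au => exact h.au_le
  | av => exact h.av_le
  | b i => exact h.b_le i
  | hp i s x => exact (h.isL21Labelling s).le x

lemma gluedLabelling_twoApart (h : Compatible k α β b M) {x y : GkV k}
    (hxy : y ∈ (Gk k).neighborSet x) :
    TwoApart (gluedLabelling α β b M x) (gluedLabelling α β b M y) := by
  cases x with
  | u =>
    obtain rfl : y = .au := by simpa using hxy
    exact .inl h.two_le_au
  | v =>
    obtain rfl : y = .av := by simpa using hxy
    exact .inl h.two_le_av
  | au =>
    rw [neighborSet_au] at hxy
    obtain rfl | rfl | ⟨i, rfl⟩ := hxy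
    exacts [.inr h.two_le_au, h.au_av, h.au_b i]
  | av =>
    rw [neighborSet_av] at hxy
    obtain rfl | rfl | ⟨i, rfl⟩ := hxy
    exacts [.inr h.two_le_av, h.au_av.symm, h.av_b i]
  | b i =>
    rw [neighborSet_b] at hxy
    obtain rfl | rfl | ⟨s, rfl⟩ := hxy
    exacts [(h.au_b i).symm, (h.av_b i).symm, h.b_c i s]
  | hp i s x =>
    by_cases hx : x = .c
    · rw [hx, neighborSet_hp_c] at hxy
      obtain rfl | rfl := hxy
      · exact hx ▸ (h.b_c i s).symm
      · exact (h.isL21Labelling s).twoApart (by simp [hx])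
    · rw [neighborSet_hp i s hx] at hxy
      obtain ⟨z, hz, rfl⟩ := hxy
      exact (h.isL21Labelling s).twoApart hz

lemma gluedLabelling_injOn (h : Compatible k α β b M) (x : GkV k) :
    ((Gk k).neighborSet x).InjOn (gluedLabelling α β b M) := by
  cases x with
  | u | v => simp
  | au =>
    rw [neighborSet_au]
    exact injOn_insert_insert_range h.b_injective (Nat.ne_of_lt (two_pos.trans_le h.two_le_av))
      (fun i ↦ (h.b_pos i).ne) fun i ↦ (h.av_b i).ne
  | av =>
    rw [neighborSet_av]
    exact injOn_insert_insert_range h.b_injective (Nat.ne_of_lt (two_pos.trans_le h.two_le_au))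
      (fun i ↦ (h.b_pos i).ne) fun i ↦ (h.au_b i).ne
  | b i =>
    rw [neighborSet_b]
    exact injOn_insert_insert_range h.c_injective h.au_av.ne h.au_ne_c h.av_ne_c
  | hp i s x =>
    by_cases hx : x = .c
    · rw [hx, neighborSet_hp_c, Set.injOn_pair]
      exact fun heq ↦ absurd heq (h.b_ne_d i s)
    · rw [neighborSet_hp i s hx]
      exact Set.InjOn.image_of_comp (g := gluedLabelling α β b M)
        ((h.isL21Labelling s).injOn_neighborSet x)

theorem isAttained (h : Compatible k α β b M) : IsAttained k α β :=
  ⟨gluedLabelling α β b M, isL21Labelling_iff_neighborSet.2 ⟨h.gluedLabelling_le, fun x ↦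
    ⟨fun _ ↦ h.gluedLabelling_twoApart, h.gluedLabelling_injOn x⟩⟩, rfl, rfl, rfl, rfl⟩

end Compatible

theorem isAttained_two_self (hk : 4 ≤ k) : IsAttained k 2 k := by
  choose M hM hc hd using fun s : Bool ↦
    Hp.exists_isL21Labelling (p := s.toNat) (show 3 ≤ k by omega) (.inr ⟨rfl, s.toNat_le⟩)
  refine Compatible.isAttained (b := fun i ↦ i + 4) (M := M) ?_
  constructor
  case b_injective => exact fun i j hij ↦ Fin.ext (Nat.add_right_cancel hij)
  case isL21Labelling => exact hM
  case c_injective => simp [Function.Injective, hc]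
  all_goals try simp only [hc, hd, Bool.forall_bool, Bool.toNat_true, Bool.toNat_false]
  all_goals omega

theorem isAttained_sub_two_self (hk : 4 ≤ k) : IsAttained k (k - 2) k := by
  obtain ⟨M₀, hM₀, hc₀, hd₀⟩ := Hp.exists_isL21Labelling (p := 0) (show 3 ≤ k by omega)
    (.inr ⟨rfl, zero_le_one⟩)
  obtain ⟨M₁, hM₁, hc₁, hd₁⟩ := Hp.exists_isL21Labelling (p := k - 1) (show 3 ≤ k by omega)
    (.inl ⟨rfl, le_rfl, Nat.sub_le k 1⟩)
  refine Compatible.isAttained (b := fun i ↦ i + 2) (M := fun s ↦ bif s then M₁ else M₀) ?_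
  constructor
  case b_injective => exact fun i j hij ↦ Fin.ext (Nat.add_right_cancel hij)
  case isL21Labelling => exact Bool.forall_bool.2 ⟨hM₀, hM₁⟩
  case c_injective =>
    have hc : M₀ .c ≠ M₁ .c := by omega
    simp [Function.Injective, hc, hc.symm]
  all_goals try simp only [Bool.forall_bool, cond_true, cond_false, hc₀, hc₁, hd₀, hd₁]
  all_goals omega

end Existence

section Necessity

variable {L : GkV k → ℕ}

lemma hp_d_eq_zero_and_le_c_or_d_eq_and_c_le (hL : IsL21Labelling (Gk k) k L)
    (i : Fin (k - 5)) (s : Bool) :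
    (L (.hp i s .d) = 0 ∧ k - 1 ≤ L (.hp i s .c)) ∨ (L (.hp i s .d) = k ∧ L (.hp i s .c) ≤ 1) :=
  Hp.d_eq_zero_and_le_c_or_d_eq_and_c_le (hL.comp_hom (hpHom i s) (hpHom_injective i s))

lemma b_pos (hL : IsL21Labelling (Gk k) k L) (hu : L .u = 0) (i : Fin (k - 5)) :
    0 < L (.b i) := by
  have : L .u ≠ L (.b i) := (hL.injOn_neighborSet .au).ne (by simp) (by simp) nofun
  omega

lemma b_lt (hL : IsL21Labelling (Gk k) k L) (i : Fin (k - 5)) : L (.b i) < k := by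
  have hbc := hL.twoApart (x := .b i) (y := .hp i true .c) (by simp)
  have hbd : L (.b i) ≠ L (.hp i true .d) :=
    (hL.injOn_neighborSet (.hp i true .c)).ne (by simp) (by simp) nofun
  have := hp_d_eq_zero_and_le_c_or_d_eq_and_c_le hL i true
  have := hL.le (.b i)
  have := hL.le (.hp i true .c)
  omega

lemma av_le_of_b_eq_one (hL : IsL21Labelling (Gk k) k L) {i : Fin (k - 5)} (hb : L (.b i) = 1) :
    L .av ≤ k - 2 := by
  have hc (s : Bool) : k - 1 ≤ L (.hp i s .c) := by
    have := hL.twoApart (x := .b i) (y := .hp i s .c) (by simp)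
    have := hp_d_eq_zero_and_le_c_or_d_eq_and_c_le hL i s
    omega
  have hav (s : Bool) : L .av ≠ L (.hp i s .c) :=
    (hL.injOn_neighborSet (.b i)).ne (by simp) (by simp) nofun
  have hcc : L (.hp i true .c) ≠ L (.hp i false .c) :=
    (hL.injOn_neighborSet (.b i)).ne (by simp) (by simp) (by simp)
  have := hL.le .av
  grind [hL.le (.hp i true .c), hL.le (.hp i false .c)]

theorem eq_and_eq_two_or_eq_sub_two_of_isAttained (hk : 6 ≤ k) {α β : ℕ}
    (h : IsAttained k α β) (hαβ : α ≤ β) : β = k ∧ (α = 2 ∨ α = k - 2) := by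
  obtain ⟨L, hL, hu, -, rfl, rfl⟩ := h
  have hinj : Function.Injective fun i ↦ L (.b i) := fun i j hij ↦
    GkV.b.inj (hL.injOn_neighborSet .au (by simp) (by simp) hij)
  have hauav := hL.twoApart (x := .au) (y := .av) (by simp)
  have huau := hL.twoApart (x := .u) (y := .au) (by simp)
  apply eq_and_eq_two_or_eq_sub_two_of_twoApart
    (B := Finset.univ.image fun i ↦ L (.b i)) hk (by omega) (by omega) (hL.le .av)
  · refine Finset.image_subset_iff.2 fun i _ ↦ Finset.mem_Icc.2 ?_
    exact ⟨b_pos hL hu i, Nat.le_sub_one_of_lt (b_lt hL i)⟩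
  · rw [Finset.card_image_of_injective _ hinj, Finset.card_univ, Fintype.card_fin]
    omega
  · exact Finset.forall_mem_image.2 fun i _ ↦ hL.twoApart (by simp)
  · exact Finset.forall_mem_image.2 fun i _ ↦ hL.twoApart (by simp)
  · intro hone
    obtain ⟨i, -, hi⟩ := Finset.mem_image.1 hone
    exact av_le_of_b_eq_one hL hi

end Necessity

end Gk

/-- For `k ≥ 6` and `α, β ∈ {0,…,k}`: there is a `k`-L(2,1)-labelling `L` of `G_k` with
`L u = L v = 0`, `L a_u = α`, `L a_v = β` iff `(α,β) ∈ {(2,k),(k,2),(k-2,k),(k,k-2)}`. -/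
theorem stmt_10 (k : ℕ) (hk : 6 ≤ k) (α β : ℕ) (hα : α ≤ k) (hβ : β ≤ k) :
    (∃ L : GkV k → ℕ, IsL21Labelling (Gk k) k L ∧
      L GkV.u = 0 ∧ L GkV.v = 0 ∧ L GkV.au = α ∧ L GkV.av = β) ↔
    (α, β) ∈ ({(2,k),(k,2),(k-2,k),(k,k-2)} : Set (ℕ × ℕ)) := by
  change Gk.IsAttained k α β ↔ _
  simp only [Set.mem_insert_iff, Set.mem_singleton_iff, Prod.mk.injEq]
  constructor
  · intro h
    obtain hαβ | hβα := le_total α β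
    · have := Gk.eq_and_eq_two_or_eq_sub_two_of_isAttained hk h hαβ
      tauto
    · have := Gk.eq_and_eq_two_or_eq_sub_two_of_isAttained hk h.symm hβα
      tauto
  · have htwo := Gk.isAttained_two_self (show 4 ≤ k by omega)
    have hsub := Gk.isAttained_sub_two_self (show 4 ≤ k by omega)
    rintro (⟨rfl, rfl⟩ | ⟨rfl, rfl⟩ | ⟨rfl, rfl⟩ | ⟨rfl, rfl⟩)
    exacts [htwo, htwo.symm, hsub, hsub.symm]
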